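/- arXiv:1311.6175 — 3 statements merged into one kernel-verified Lean document; each statement's English description precedes it below -/
import Mathlib

section
/- Let n be a positive integer. For all idempotents ε, φ ∈ IO_∞(ℤ^n_lex) there exist infinitely many pairs (α, β) of elements of IO_∞(ℤ^n_lex) such that α·β = ε and β·α = φ. -/
/-- Composition of partial selfmaps (left map applied first):
`dom (PComp f g) = {x ∈ dom f : f x ∈ dom g}` and `(PComp f g) x = g (f x)`. -/
def PComp {X : Type*} (f g : X → Option X) : X → Option X := fun x => (f x).bind g

/-- The identity partial selfmap (everywhere defined). -/
def PId {X : Type*} : X → Option X := fun x => some x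

/-- A partial selfmap is injective. -/
def PInj {X : Type*} (f : X → Option X) : Prop :=
  ∀ ⦃x y a : X⦄, f x = some a → f y = some a → x = y

/-- A partial selfmap is monotone with respect to the relation `r`. -/
def PMono {X : Type*} (r : X → X → Prop) (f : X → Option X) : Prop :=
  ∀ ⦃x y a b : X⦄, r x y → f x = some a → f y = some b → r a b

/-- The domain of a partial selfmap is cofinite. -/
def DomCof {X : Type*} (f : X → Option X) : Prop := {x | f x = none}.Finite

/-- The range (image) of a partial selfmap is cofinite. -/
def RanCof {X : Type*} (f : X → Option X) : Prop := {y | ∀ x, f x ≠ some y}.Finite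

/-- `IOmap r f` says that `f` is a monotone (w.r.t. `r`) injective partial selfmap
with cofinite domain and cofinite image, i.e. an element of `IO_∞`. -/
def IOmap {X : Type*} (r : X → X → Prop) (f : X → Option X) : Prop :=
  PInj f ∧ PMono r f ∧ DomCof f ∧ RanCof f

/-- The lexicographic order on `L_n × ℤ` (with `L_n = Fin n`):
`(i,m) ≤ (j,k)` iff `i < j`, or `i = j` and `m ≤ k`. -/
def lexLe (n : ℕ) (p q : Fin n × ℤ) : Prop :=
  p.1 < q.1 ∨ (p.1 = q.1 ∧ p.2 ≤ q.2)

/-- The domain of a partial selfmap, as a set. -/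
def pdom {X : Type*} (f : X → Option X) : Set X := {x | ∃ y, f x = some y}

/-- The range (image) of a partial selfmap, as a set. -/
def pran {X : Type*} (f : X → Option X) : Set X := {y | ∃ x, f x = some y}

theorem exists_iso_int (S : Set ℤ) (hS : Sᶜ.Finite) : Nonempty (S ≃o ℤ) := by
  classical
  have hinf : ∀ N : ℤ, ∃ m ∈ S, N < m := by
    intro N
    by_contra! h
    exact (Set.Ioi_infinite N) (hS.subset fun m hm hmS => absurd (h m hmS) (not_le.mpr hm))
  have hinf' : ∀ N : ℤ, ∃ m ∈ S, m < N := by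
    intro N
    by_contra! h
    exact (Set.Iio_infinite N) (hS.subset fun m hm hmS => absurd (h m hmS) (not_le.mpr hm))
  have : Nonempty S := by
    obtain ⟨m, hm, -⟩ := hinf 0
    exact ⟨⟨m, hm⟩⟩
  have : NoMaxOrder S := ⟨fun a => by
    obtain ⟨m, hm, h⟩ := hinf a.1
    exact ⟨⟨m, hm⟩, h⟩⟩
  have : NoMinOrder S := ⟨fun a => by
    obtain ⟨m, hm, h⟩ := hinf' a.1
    exact ⟨⟨m, hm⟩, h⟩⟩
  have : LocallyFiniteOrder S := LocallyFiniteOrder.ofFiniteIcc fun a b =>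
    Set.Finite.of_finite_image (f := Subtype.val)
      ((Set.finite_Icc a.1 b.1).subset (by rintro _ ⟨c, hc, rfl⟩; exact hc))
      Subtype.val_injective.injOn
  let := LinearLocallyFiniteOrder.succOrder S
  let := LinearLocallyFiniteOrder.predOrder S
  exact ⟨orderIsoIntOfLinearSuccPredArch⟩

open Classical in
noncomputable def shiftMap {n : ℕ} {A B : Fin n → Set ℤ} (ga : ∀ i, A i ≃o ℤ) (gb : ∀ i, B i ≃o ℤ)
    (k : ℤ) (x : Fin n × ℤ) : Option (Fin n × ℤ) :=
  if h : x.2 ∈ A x.1 then some (x.1, ((gb x.1).symm (ga x.1 ⟨x.2, h⟩ + k)).1) else none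

theorem shiftMap_iff {n : ℕ} {A B : Fin n → Set ℤ} (ga : ∀ i, A i ≃o ℤ) (gb : ∀ i, B i ≃o ℤ)
    (k : ℤ) (x y : Fin n × ℤ) : shiftMap ga gb k x = some y ↔
      ∃ (i : Fin n) (a : A i) (b : B i), x = (i, a.1) ∧ y = (i, b.1) ∧ gb i b = ga i a + k := by
  unfold shiftMap
  constructor
  · intro h
    split_ifs at h with hx
    refine ⟨x.1, ⟨x.2, hx⟩, _, rfl, (Option.some.inj h).symm, by simp⟩
  · rintro ⟨i, a, b, rfl, rfl, h⟩
    simp [← h]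

theorem shiftMap_none {n : ℕ} {A B : Fin n → Set ℤ} (ga : ∀ i, A i ≃o ℤ) (gb : ∀ i, B i ≃o ℤ)
    (k : ℤ) (x : Fin n × ℤ) : shiftMap ga gb k x = none ↔ x.2 ∉ A x.1 := by
  unfold shiftMap
  split_ifs with h <;> simp [h]

theorem shiftMap_symm {n : ℕ} {A B : Fin n → Set ℤ} (ga : ∀ i, A i ≃o ℤ) (gb : ∀ i, B i ≃o ℤ)
    (k : ℤ) (x y : Fin n × ℤ) :
    shiftMap ga gb k x = some y ↔ shiftMap gb ga (-k) y = some x := by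
  rw [shiftMap_iff, shiftMap_iff]
  constructor
  · rintro ⟨i, a, b, h1, h2, h⟩
    exact ⟨i, b, a, h2, h1, by omega⟩
  · rintro ⟨i, a, b, h1, h2, h⟩
    exact ⟨i, b, a, h2, h1, by omega⟩

theorem shiftMap_IOmap {n : ℕ} {A B : Fin n → Set ℤ} (ga : ∀ i, A i ≃o ℤ) (gb : ∀ i, B i ≃o ℤ)
    (k : ℤ) (hA : {x : Fin n × ℤ | x.2 ∉ A x.1}.Finite)
    (hB : {x : Fin n × ℤ | x.2 ∉ B x.1}.Finite) : IOmap (lexLe n) (shiftMap ga gb k) := by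
  refine ⟨?_, ?_, ?_, ?_⟩
  · intro x y a hx hy
    rw [shiftMap_symm] at hx hy
    exact Option.some.inj (hx.symm.trans hy)
  · intro x y a b hr hx hy
    rw [shiftMap_iff] at hx hy
    obtain ⟨i, a, b, rfl, rfl, h⟩ := hx
    obtain ⟨j, c, d, rfl, rfl, h'⟩ := hy
    rcases hr with hr | ⟨hr, hr'⟩
    · exact Or.inl hr
    · dsimp only at hr hr'
      subst hr
      refine Or.inr ⟨rfl, ?_⟩
      have h1 : ga i a ≤ ga i c := (ga i).le_iff_le.mpr hr'
      have h2 : gb i b ≤ gb i d := by omega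
      exact (gb i).le_iff_le.mp h2
  · exact hA.subset fun x hx => (shiftMap_none ga gb k x).mp hx
  · refine hB.subset fun y hy => ?_
    rw [Set.mem_setOf_eq, ← shiftMap_none gb ga (-k) y]
    by_contra hne
    obtain ⟨x, hx⟩ := Option.ne_none_iff_exists'.mp hne
    exact hy x ((shiftMap_symm ga gb k x y).mpr hx)

theorem idem_eq {n : ℕ} {e : Fin n × ℤ → Option (Fin n × ℤ)} (he : PInj e)
    (hee : PComp e e = e) {x y : Fin n × ℤ} (h : e x = some y) : y = x := by
  have h1 := congrFun hee x
  simp only [PComp, h, Option.bind_some] at h1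
  exact he h1 h

theorem comp_shift {n : ℕ} {e : Fin n × ℤ → Option (Fin n × ℤ)} (he : PInj e)
    (hee : PComp e e = e) {B : Fin n → Set ℤ}
    (ga : ∀ i, {m : ℤ | e (i, m) ≠ none} ≃o ℤ) (gb : ∀ i, B i ≃o ℤ) (k : ℤ) :
    PComp (shiftMap ga gb k) (shiftMap gb ga (-k)) = e := by
  funext x
  unfold PComp
  rcases hx : shiftMap ga gb k x with _ | y
  · rw [shiftMap_none] at hx
    simpa [eq_comm] using hx
  · have h2 := (shiftMap_symm ga gb k x y).mp hx
    rw [Option.bind_some, h2]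
    have hne : e x ≠ none := by
      intro h
      have : shiftMap ga gb k x = none := (shiftMap_none ga gb k x).mpr (by simpa using h)
      rw [this] at hx
      cases hx
    obtain ⟨z, hz⟩ := Option.ne_none_iff_exists'.mp hne
    rw [hz, idem_eq he hee hz]

/-- For all idempotents `ε, φ` of `IO_∞(ℤ^n_lex)` there exist infinitely many pairs
`(α, β)` of elements of `IO_∞(ℤ^n_lex)` with `α·β = ε` and `β·α = φ`. -/
theorem stmt6 (n : ℕ) (hn : 0 < n) (e p : Fin n × ℤ → Option (Fin n × ℤ))
    (he : IOmap (lexLe n) e) (hp : IOmap (lexLe n) p)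
    (hee : PComp e e = e) (hpp : PComp p p = p) :
    {q : (Fin n × ℤ → Option (Fin n × ℤ)) × (Fin n × ℤ → Option (Fin n × ℤ)) |
      IOmap (lexLe n) q.1 ∧ IOmap (lexLe n) q.2 ∧
      PComp q.1 q.2 = e ∧ PComp q.2 q.1 = p}.Infinite := by
  have cof : ∀ f : Fin n × ℤ → Option (Fin n × ℤ), DomCof f →
      ∀ i, Nonempty ({m : ℤ | f (i, m) ≠ none} ≃o ℤ) := by
    intro f hf i
    apply exists_iso_int
    refine Set.Finite.of_finite_image (f := fun m : ℤ => (i, m)) (hf.subset ?_)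
      (fun a _ b _ h => by simpa using h)
    rintro _ ⟨m, hm, rfl⟩
    simpa using hm
  have ga : ∀ i, {m : ℤ | e (i, m) ≠ none} ≃o ℤ := fun i => (cof e he.2.2.1 i).some
  have gb : ∀ i, {m : ℤ | p (i, m) ≠ none} ≃o ℤ := fun i => (cof p hp.2.2.1 i).some
  have hA : {x : Fin n × ℤ | x.2 ∉ {m : ℤ | e (x.1, m) ≠ none}}.Finite :=
    he.2.2.1.subset fun x hx => by simpa using hx
  have hB : {x : Fin n × ℤ | x.2 ∉ {m : ℤ | p (x.1, m) ≠ none}}.Finite :=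
    hp.2.2.1.subset fun x hx => by simpa using hx
  refine Set.infinite_of_injective_forall_mem
    (f := fun k : ℤ => (shiftMap ga gb k, shiftMap gb ga (-k))) ?_ ?_
  · intro k l hkl
    have h1 : shiftMap ga gb k = shiftMap ga gb l := congrArg Prod.fst hkl
    let i : Fin n := ⟨0, hn⟩
    let a := (ga i).symm 0
    let b := (gb i).symm k
    have h2 : shiftMap ga gb k (i, a.1) = some (i, b.1) :=
      (shiftMap_iff ga gb k _ _).mpr ⟨i, a, b, rfl, rfl, by simp [a, b]⟩
    have h3 : shiftMap ga gb l (i, a.1) = some (i, ((gb i).symm l).1) :=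
      (shiftMap_iff ga gb l _ _).mpr ⟨i, a, _, rfl, rfl, by simp [a]⟩
    rw [← h1, h2] at h3
    have h4 : b.1 = ((gb i).symm l).1 := congrArg Prod.snd (Option.some.inj h3)
    exact (gb i).symm.injective (Subtype.ext h4)
  · intro k
    refine ⟨shiftMap_IOmap ga gb k hA hB, shiftMap_IOmap gb ga (-k) hB hA,
      comp_shift he.1 hee ga gb k, ?_⟩
    have := comp_shift hp.1 hpp gb ga (-k)
    rwa [neg_neg] at this
end

section
/- Let n be a positive integer. The monoid IO_∞(ℤ^n_lex) is bisimple: for all α, β ∈ IO_∞(ℤ^n_lex) there exist γ, χ₁, χ₂, χ₃, χ₄ ∈ IO_∞(ℤ^n_lex) such that α·χ₁ = γ, γ·χ₂ = α, χ₃·γ = β and χ₄·β = γ (i.e., every two elements of IO_∞(ℤ^n_lex) are D-related, where D = R∘L with R and L Green's relations of mutual right, respectively left, divisibility). -/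
noncomputable def pinv {X : Type*} (f : X → Option X) : X → Option X :=
  fun y => open Classical in if h : ∃ x, f x = some y then some h.choose else none

theorem pinv_iff {X : Type*} {f : X → Option X} (hf : PInj f) (x y : X) :
    pinv f y = some x ↔ f x = some y := by
  unfold pinv
  split_ifs with h
  · constructor
    · intro e
      rw [← Option.some.inj e]
      exact h.choose_spec
    · intro e
      rw [hf h.choose_spec e]
  · constructor
    · intro e
      cases e
    · intro e
      exact absurd ⟨x, e⟩ h

theorem pcomp_iff {X : Type*} (f g : X → Option X) (x z : X) :
    PComp f g x = some z ↔ ∃ y, f x = some y ∧ g y = some z := by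
  simp [PComp, Option.bind_eq_some_iff]

theorem pext {X : Type*} {f g : X → Option X}
    (h : ∀ x y, f x = some y ↔ g x = some y) : f = g := by
  funext x
  exact Option.ext (h x)

theorem ne_none_iff_ex {X : Type*} (f : X → Option X) (x : X) :
    f x = none ↔ ∀ y, f x ≠ some y := Option.eq_none_iff_forall_ne_some

theorem IOmap.inv {n : ℕ} {f : Fin n × ℤ → Option (Fin n × ℤ)} (hf : IOmap (lexLe n) f) :
    IOmap (lexLe n) (pinv f) := by
  obtain ⟨h1, h2, h3, h4⟩ := hf
  refine ⟨?_, ?_, ?_, ?_⟩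
  · intro x y a hx hy
    rw [pinv_iff h1] at hx hy
    rw [hx] at hy
    exact Option.some.inj hy
  · intro x y a b hxy hx hy
    rw [pinv_iff h1] at hx hy
    by_contra hab
    have hba : lexLe n b a := by
      unfold lexLe at *
      grind
    have hyx := h2 hba hy hx
    have hxy' : x = y := by
      unfold lexLe at *
      ext <;> grind
    subst hxy'
    have := h1 hx hy
    subst this
    exact hab hba
  · refine h4.subset ?_
    intro y hy x hx
    have : pinv f y = none := hy
    rw [← pinv_iff h1, this] at hx
    cases hx
  · refine h3.subset ?_
    intro x hx
    rw [Set.mem_setOf_eq, ne_none_iff_ex]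
    intro y hy
    exact hx y ((pinv_iff h1 x y).2 hy)

theorem IOmap.comp {X : Type*} {r : X → X → Prop} {f g : X → Option X}
    (hf : IOmap r f) (hg : IOmap r g) : IOmap r (PComp f g) := by
  obtain ⟨h1, h2, h3, h4⟩ := hf
  obtain ⟨k1, k2, k3, k4⟩ := hg
  refine ⟨?_, ?_, ?_, ?_⟩
  · intro x y a hx hy
    rw [pcomp_iff] at hx hy
    obtain ⟨u, hu, hu'⟩ := hx
    obtain ⟨v, hv, hv'⟩ := hy
    have := k1 hu' hv'
    subst this
    exact h1 hu hv
  · intro x y a b hxy hx hy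
    rw [pcomp_iff] at hx hy
    obtain ⟨u, hu, hu'⟩ := hx
    obtain ⟨v, hv, hv'⟩ := hy
    exact k2 (h2 hxy hu hv) hu' hv'
  · have hfin : (f ⁻¹' (some '' {y | g y = none})).Finite := by
      refine (k3.image some).preimage ?_
      rintro x ⟨y, hy, hxy⟩ x' - e
      exact h1 hxy.symm (e.symm.trans hxy.symm)
    refine (h3.union hfin).subset ?_
    intro x hx
    have hx' : (f x).bind g = none := hx
    cases hfx : f x with
    | none => exact Or.inl hfx
    | some y =>
      right
      rw [hfx] at hx'
      exact ⟨y, hx', hfx.symm⟩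
  · have hfin := h4.image (fun z => (g z).getD z)
    refine (k4.union hfin).subset ?_
    intro y hy
    by_cases h : ∃ z, g z = some y
    · right
      obtain ⟨z, hz⟩ := h
      refine ⟨z, ?_, by simp [hz]⟩
      intro x hx
      exact hy x ((pcomp_iff _ _ _ _).2 ⟨z, hx, hz⟩)
    · left
      intro z hz
      exact h ⟨z, hz⟩

/-- Remove the point `q`, shifting down what is above it in its row. -/
def removePt (n : ℕ) (q : Fin n × ℤ) : Fin n × ℤ → Option (Fin n × ℤ) := fun x =>
  if x = q then none else if x.1 = q.1 ∧ q.2 < x.2 then some (x.1, x.2 - 1) else some x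

theorem removePt_none (n : ℕ) (q x : Fin n × ℤ) : removePt n q x = none ↔ x = q := by
  unfold removePt
  split_ifs <;> simp_all

theorem removePt_surj (n : ℕ) (q y : Fin n × ℤ) : ∃ x, removePt n q x = some y := by
  obtain ⟨i, m⟩ := q
  obtain ⟨j, k⟩ := y
  by_cases h : j = i ∧ m ≤ k
  · refine ⟨(j, k + 1), ?_⟩
    unfold removePt
    grind
  · refine ⟨(j, k), ?_⟩
    unfold removePt
    grind

theorem removePt_io (n : ℕ) (q : Fin n × ℤ) : IOmap (lexLe n) (removePt n q) := by
  refine ⟨?_, ?_, ?_, ?_⟩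
  · rintro ⟨i, m⟩ ⟨j, k⟩ ⟨a, b⟩ hx hy
    obtain ⟨u, v⟩ := q
    unfold removePt at hx hy
    grind
  · rintro ⟨i, m⟩ ⟨j, k⟩ ⟨a, b⟩ ⟨c, d⟩ hxy hx hy
    obtain ⟨u, v⟩ := q
    unfold removePt at hx hy
    unfold lexLe at *
    grind
  · refine (Set.finite_singleton q).subset ?_
    intro x hx
    exact (removePt_none n q x).1 hx
  · refine Set.finite_empty.subset ?_
    intro y hy
    obtain ⟨x, hx⟩ := removePt_surj n q y
    exact (hy x hx).elim

theorem exists_unfold (n : ℕ) (S : Set (Fin n × ℤ)) (hS : S.Finite) :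
    ∃ h : Fin n × ℤ → Option (Fin n × ℤ), IOmap (lexLe n) h ∧
      (∀ x, h x = none ↔ x ∈ S) ∧ ∀ y, ∃ x, h x = some y := by
  induction S, hS using Set.Finite.induction_on with
  | empty =>
    refine ⟨fun x => some x, ⟨?_, ?_, ?_, ?_⟩, ?_, ?_⟩
    · intro x y a hx hy
      grind
    · intro x y a b hxy hx hy
      grind
    · simp [DomCof]
    · simp [RanCof]
    · simp
    · simp
  | @insert p S hp _ ih =>
    obtain ⟨h, h1, h2, h3⟩ := ih
    obtain ⟨q, hq⟩ : ∃ q, h p = some q := by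
      cases e : h p with
      | none => exact absurd ((h2 p).1 e) hp
      | some q => exact ⟨q, rfl⟩
    refine ⟨PComp h (removePt n q), h1.comp (removePt_io n q), ?_, ?_⟩
    · intro x
      rw [Set.mem_insert_iff, ← h2 x]
      unfold PComp
      cases e : h x with
      | none => simp
      | some y =>
        simp only [Option.bind_some, removePt_none, reduceCtorEq, or_false]
        constructor
        · intro hy
          subst hy
          exact h1.1 e hq
        · intro hx
          subst hx
          exact Option.some.inj (e.symm.trans hq)
    · intro y
      obtain ⟨z, hz⟩ := removePt_surj n q y
      obtain ⟨x, hx⟩ := h3 z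
      exact ⟨x, (pcomp_iff _ _ _ _).2 ⟨z, hx, hz⟩⟩

/-- If `dom f ⊇ dom g`, then `f f⁻¹ g = g`. -/
theorem pcomp_inv_left {X : Type*} {f g : X → Option X} (hf : PInj f)
    (h : ∀ x, f x = none → g x = none) : PComp f (PComp (pinv f) g) = g := by
  apply pext
  intro x y
  simp only [pcomp_iff, pinv_iff hf]
  constructor
  · rintro ⟨a, ha, b, hb, hg⟩
    rwa [hf ha hb]
  · intro hg
    cases e : f x with
    | none => rw [h x e] at hg; cases hg
    | some a => exact ⟨a, rfl, x, e, hg⟩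

/-- If `ran f ⊇ ran g`, then `g f⁻¹ f = g`. -/
theorem pcomp_inv_right {X : Type*} {f g : X → Option X} (hf : PInj f)
    (h : ∀ x y, g x = some y → ∃ z, f z = some y) : PComp (PComp g (pinv f)) f = g := by
  apply pext
  intro x y
  simp only [pcomp_iff, pinv_iff hf]
  constructor
  · rintro ⟨a, ⟨b, hb, hab⟩, ha⟩
    rw [hab] at ha
    rw [hb, ha]
  · intro hg
    obtain ⟨z, hz⟩ := h x y hg
    exact ⟨z, ⟨y, hg, hz⟩, hz⟩

/-- The monoid `IO_∞(ℤ^n_lex)` is bisimple: any two elements `α, β` are `D`-related,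
i.e. there is `γ` with `α R γ` and `γ L β`. -/
theorem stmt7 (n : ℕ) (hn : 0 < n) (f g : Fin n × ℤ → Option (Fin n × ℤ))
    (hf : IOmap (lexLe n) f) (hg : IOmap (lexLe n) g) :
    ∃ γ χ₁ χ₂ χ₃ χ₄ : Fin n × ℤ → Option (Fin n × ℤ),
      IOmap (lexLe n) γ ∧ IOmap (lexLe n) χ₁ ∧ IOmap (lexLe n) χ₂ ∧
      IOmap (lexLe n) χ₃ ∧ IOmap (lexLe n) χ₄ ∧
      PComp f χ₁ = γ ∧ PComp γ χ₂ = f ∧ PComp χ₃ γ = g ∧ PComp χ₄ g = γ := by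
  obtain ⟨a, a1, a2, a3⟩ := exists_unfold n _ hf.2.2.1
  obtain ⟨b, b1, b2, b3⟩ := exists_unfold n _ hg.2.2.2
  have hγ : IOmap (lexLe n) (PComp a (pinv b)) := a1.comp b1.inv
  have hran : ∀ y, (∃ x, PComp a (pinv b) x = some y) ↔ ∃ x, g x = some y := by
    intro y
    simp only [pcomp_iff, pinv_iff b1.1]
    constructor
    · rintro ⟨x, z, hx, hz⟩
      by_contra hne
      push Not at hne
      rw [(b2 y).2 hne] at hz
      cases hz
    · rintro ⟨x, hx⟩
      cases e : b y with
      | none => exact ((b2 y).1 e x hx).elim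
      | some z =>
        obtain ⟨w, hw⟩ := a3 z
        exact ⟨w, z, hw, rfl⟩
  have hdom : ∀ x, PComp a (pinv b) x = none ↔ f x = none := by
    intro x
    constructor
    · intro h
      refine (a2 x).1 ?_
      cases e : a x with
      | none => rfl
      | some z =>
        obtain ⟨y, hy⟩ := b3 z
        have := (pcomp_iff a (pinv b) x y).2 ⟨z, e, (pinv_iff b1.1 _ _).2 hy⟩
        rw [h] at this
        cases this
    · intro h
      simp [PComp, (a2 x).2 h]
  generalize PComp a (pinv b) = γ at hγ hran hdom
  exact ⟨γ, PComp (pinv f) γ, PComp (pinv γ) f, PComp g (pinv γ), PComp γ (pinv g), hγ,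
    hf.inv.comp hγ, hγ.inv.comp hf, hg.comp hγ.inv, hγ.comp hg.inv,
    pcomp_inv_left hf.1 fun x => (hdom x).2, pcomp_inv_left hγ.1 fun x => (hdom x).1,
    pcomp_inv_right hγ.1 fun x y h => (hran y).2 ⟨x, h⟩,
    pcomp_inv_right hg.1 fun x y h => (hran y).1 ⟨x, h⟩⟩
end

section
/- Let n ≥ 2, let {i_1,…,i_k} be a set of distinct indices in {1,…,n} with k ≤ n, and let α, β ∈ IO_∞(ℤ^n_lex); write α(i,j) = (i, α^i(j)) for (i,j) ∈ dom α. Then there exist idempotents ε_1, …, ε_k ∈ IO_∞(ℤ^n_lex) with dom ε_m ⊇ ({1,…,n} \ {i_m}) × ℤ for each m and α·ε_1⋯ε_k = β·ε_1⋯ε_k (i.e., α σ_{[i_1,…,i_k]} β) if and only if the following two conditions hold: (i) there exists a positive integer p such that for every i ∈ {i_1,…,i_k} and every integer j with |j| ≥ p, (i,j) ∈ dom α ∩ dom β and α^i(j) = β^i(j); and (ii) dom α ∩ (({1,…,n} \ {i_1,…,i_k}) × ℤ) = dom β ∩ (({1,…,n} \ {i_1,…,i_k}) × ℤ) and α(i,j)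 = β(i,j) for all (i,j) in this common set. -/
lemma aux_strict {n : ℕ} {f : Fin n × ℤ → Option (Fin n × ℤ)} (hf : IOmap (lexLe n) f)
    {x y a b : Fin n × ℤ} (hx : f x = some a) (hy : f y = some b) (h : x.1 < y.1) :
    a.1 < b.1 := by
  obtain ⟨hi, hm, hd, -⟩ := hf
  by_contra hab
  have h1 : a.1 = b.1 := by
    rcases hm (Or.inl h) hx hy with h2 | h2
    · exact absurd h2 hab
    · exact h2.1
  have hT : (({a.1} : Set (Fin n)) ×ˢ Set.Icc a.2 b.2).Finite :=
    (Set.finite_singleton _).prod (Set.finite_Icc _ _)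
  have hpre : {z | ∃ c ∈ (({a.1} : Set (Fin n)) ×ˢ Set.Icc a.2 b.2), f z = some c}.Finite := by
    have : {z | ∃ c ∈ (({a.1} : Set (Fin n)) ×ˢ Set.Icc a.2 b.2), f z = some c}
        = ⋃ c ∈ (({a.1} : Set (Fin n)) ×ˢ Set.Icc a.2 b.2), {z | f z = some c} := by
      ext z; simp
    rw [this]
    refine hT.biUnion fun c _ => Set.Subsingleton.finite ?_
    intro u hu v hv
    exact hi hu hv
  have hall := (hpre.union hd)
  have hinf : ((fun j : ℤ => (x.1, j)) '' Set.Ici x.2).Infinite := by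
    refine (Set.Ici_infinite x.2).image ?_
    intro u _ v _ huv
    simpa using huv
  refine hinf (hall.subset ?_)
  rintro _ ⟨j, hj, rfl⟩
  cases hz : f (x.1, j) with
  | none => exact Or.inr hz
  | some c =>
    refine Or.inl ⟨c, ?_, hz⟩
    have l1 : lexLe n a c := hm (x := x) (y := (x.1, j)) (Or.inr ⟨rfl, hj⟩) hx hz
    have l2 : lexLe n c b := hm (x := (x.1, j)) (y := y) (Or.inl h) hz hy
    unfold lexLe at l1 l2
    simp only [Set.mem_prod, Set.mem_singleton_iff, Set.mem_Icc]
    rw [← h1] at l2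
    rcases l1 with l1 | l1 <;> rcases l2 with l2 | l2
    · exact absurd (l1.trans l2) (lt_irrefl _)
    · exact absurd l2.1 l1.ne'
    · exact absurd l1.1 l2.ne'
    · exact ⟨l1.1.symm, l1.2, l2.2⟩

lemma aux_exists {n : ℕ} {f : Fin n × ℤ → Option (Fin n × ℤ)} (hf : IOmap (lexLe n) f)
    (i : Fin n) : ∃ q : Fin n × ℤ × (Fin n × ℤ), q.1 = i ∧ f (i, q.2.1) = some q.2.2 := by
  obtain ⟨hi, hm, hd, -⟩ := hf
  by_contra hcon
  have hinf : ((fun j : ℤ => (i, j)) '' Set.univ).Infinite := by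
    refine (Set.infinite_univ).image ?_
    intro u _ v _ huv
    simpa using huv
  refine hinf (hd.subset ?_)
  rintro _ ⟨j, -, rfl⟩
  cases hz : f (i, j) with
  | none => exact hz
  | some c => exact absurd ⟨(i, j, c), rfl, hz⟩ hcon

lemma aux_fst {n : ℕ} {f : Fin n × ℤ → Option (Fin n × ℤ)} (hf : IOmap (lexLe n) f)
    {x a : Fin n × ℤ} (hx : f x = some a) : a.1 = x.1 := by
  have H : ∀ i : Fin n, ∃ z c, z.1 = i ∧ f z = some c ∧ (i = x.1 → z = x ∧ c = a) := by
    intro i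
    by_cases h : i = x.1
    · exact ⟨x, a, h.symm, hx, fun _ => ⟨rfl, rfl⟩⟩
    · obtain ⟨q, -, hq⟩ := aux_exists hf i
      exact ⟨_, _, rfl, hq, fun h' => absurd h' h⟩
  choose z c h1 h2 h3 using H
  have hs : StrictMono (fun i => (c i).1) := by
    intro i j hij
    exact aux_strict hf (h2 i) (h2 j) (by rw [h1, h1]; exact hij)
  have e := (h3 x.1 rfl).2
  have l1 : x.1 ≤ (c x.1).1 := hs.le_apply
  have l2 : (c x.1).1 ≤ x.1 := hs.apply_le
  rw [e] at l1 l2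
  exact le_antisymm l2 l1

lemma aux_fold {X : Type*} (L : List (X → Option X))
    (h : ∀ e ∈ L, ∀ x y, e x = some y → y = x) (x y : X) :
    L.foldr PComp PId x = some y ↔ y = x ∧ ∀ e ∈ L, e x = some x := by
  induction L generalizing x y with
  | nil => simp [PId, eq_comm]
  | cons e L ih =>
    have ih' := ih (fun e he => h e (List.mem_cons_of_mem _ he))
    simp only [List.foldr_cons, PComp, Option.bind_eq_some_iff, List.mem_cons, forall_eq_or_imp]
    constructor
    · rintro ⟨z, hz, hy⟩
      obtain rfl := h e List.mem_cons_self _ _ hz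
      have := (ih' _ _).1 hy
      exact ⟨this.1, hz, this.2⟩
    · rintro ⟨rfl, hz, hy⟩
      exact ⟨_, hz, (ih' _ _).2 ⟨rfl, hy⟩⟩

lemma aux_fold' {X : Type*} {k : ℕ} (E : Fin k → X → Option X)
    (h : ∀ m x y, E m x = some y → y = x) (x y : X) :
    (List.ofFn E).foldr PComp PId x = some y ↔ y = x ∧ ∀ m, E m x = some x := by
  rw [aux_fold]
  · simp [List.mem_ofFn]
  · intro e he
    obtain ⟨m, rfl⟩ := (List.mem_ofFn' _ _).1 he
    exact h m

lemma aux_idem {X : Type*} {e : X → Option X} (hi : PInj e) (he : PComp e e = e) (x y : X)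
    (h : e x = some y) : y = x := by
  have := congrFun he x
  simp only [PComp, h, Option.bind_some] at this
  exact hi this h

lemma aux_fwd {n k : ℕ} {ι : Fin k → Fin n} {f g P : Fin n × ℤ → Option (Fin n × ℤ)}
    (hf : IOmap (lexLe n) f) (hP : ∀ x y, P x = some y → y = x)
    (hP2 : ∀ x : Fin n × ℤ, (∀ m, x.1 ≠ ι m) → P x = some x)
    (he : PComp f P = PComp g P) (x : Fin n × ℤ) (hx : ∀ m, x.1 ≠ ι m) (y : Fin n × ℤ)
    (h : f x = some y) : g x = some y := by
  have hy := hP2 y (by rw [aux_fst hf h]; exact hx)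
  have := congrFun he x
  simp only [PComp, h, Option.bind_some, hy] at this
  obtain ⟨z, hz, hz'⟩ := Option.bind_eq_some_iff.1 this.symm
  rw [hz, hP _ _ hz']

/-- Description of the congruence `σ_{[i_1,…,i_k]}` on `IO_∞(ℤ^n_lex)` (n ≥ 2), where
`{i_1,…,i_k} = range ι` for an injective `ι : Fin k → Fin n`, `k ≤ n`:
`α σ_{[i_1,…,i_k]} β` — i.e. `α·ε_1⋯ε_k = β·ε_1⋯ε_k` for some idempotents
`ε_m ∈ IO_∞(ℤ^n_lex)` with `dom ε_m ⊇ ({1,…,n} \ {i_m}) × ℤ` — holds iff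
(i) for some positive `p`, `α` and `β` are defined and agree at `(i, j)` for every
`i ∈ {i_1,…,i_k}` and every `|j| ≥ p`, and (ii) `α` and `β` have the same domain and
the same values on the lines outside `{i_1,…,i_k}`. -/
theorem stmt14 (n k : ℕ) (hn : 2 ≤ n) (hk : k ≤ n)
    (ι : Fin k → Fin n) (hι : Function.Injective ι)
    (f g : Fin n × ℤ → Option (Fin n × ℤ))
    (hf : IOmap (lexLe n) f) (hg : IOmap (lexLe n) g) :
    (∃ E : Fin k → (Fin n × ℤ → Option (Fin n × ℤ)),
        (∀ m : Fin k, IOmap (lexLe n) (E m) ∧ PComp (E m) (E m) = E m ∧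
          ∀ x : Fin n × ℤ, x.1 ≠ ι m → ∃ y, E m x = some y) ∧
        PComp f ((List.ofFn E).foldr PComp PId) =
          PComp g ((List.ofFn E).foldr PComp PId)) ↔
    ((∃ p : ℤ, 0 < p ∧ ∀ (m : Fin k) (j : ℤ), p ≤ |j| →
        ∃ y, f (ι m, j) = some y ∧ g (ι m, j) = some y) ∧
     (∀ i : Fin n, (∀ m : Fin k, i ≠ ι m) → ∀ j : ℤ, f (i, j) = g (i, j))) := by
  classical
  constructor
  · rintro ⟨E, hE, he⟩
    have hid : ∀ m x y, E m x = some y → y = x := fun m => aux_idem (hE m).1.1 (hE m).2.1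
    have hfold := aux_fold' E hid
    set P := (List.ofFn E).foldr PComp PId with hPdef
    have hP : ∀ x y, P x = some y → y = x := fun x y h => ((hfold x y).1 h).1
    have hP2 : ∀ x : Fin n × ℤ, (∀ m, x.1 ≠ ι m) → P x = some x := by
      intro x hx
      refine (hfold x x).2 ⟨rfl, fun m => ?_⟩
      obtain ⟨y, hy⟩ := (hE m).2.2 x (hx m)
      rw [hy, hid _ _ _ hy]
    refine ⟨?_, ?_⟩
    · have hfin : ({x | P x = none} : Set (Fin n × ℤ)).Finite := by
        refine (Set.finite_iUnion (fun m => (hE m).1.2.2.1)).subset ?_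
        intro x hx
        by_contra hcon
        simp only [Set.mem_iUnion, Set.mem_setOf_eq, not_exists] at hcon hx
        have : P x = some x := (hfold x x).2 ⟨rfl, fun m => by
          obtain ⟨y, hy⟩ := Option.ne_none_iff_exists'.1 (hcon m)
          rw [hy, hid _ _ _ hy]⟩
        rw [hx] at this
        cases this
      have hbad : ({x | PComp f P x = none} : Set (Fin n × ℤ)).Finite := by
        have h2 : (⋃ c ∈ ({x | P x = none} : Set (Fin n × ℤ)), {z | f z = some c}).Finite :=
          hfin.biUnion fun c _ => Set.Subsingleton.finite (fun u hu v hv => hf.1 hu hv)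
        refine (hf.2.2.1.union h2).subset ?_
        intro x hx
        simp only [Set.mem_setOf_eq, PComp] at hx
        cases hz : f x with
        | none => exact Or.inl hz
        | some c =>
          rw [hz] at hx
          exact Or.inr (Set.mem_biUnion (x := c) hx hz)
      obtain ⟨B, hB⟩ := (hbad.image (fun x => |x.2|)).bddAbove
      refine ⟨max B 0 + 1, by positivity, fun m j hj => ?_⟩
      have hne : PComp f P (ι m, j) ≠ none := by
        intro hcon
        have := hB ⟨(ι m, j), hcon, rfl⟩
        simp only at this
        have := le_max_left B 0
        omega
      obtain ⟨y, hy⟩ := Option.ne_none_iff_exists'.1 hne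
      have hy' := hy
      rw [he] at hy'
      obtain ⟨u, hu, hu'⟩ := Option.bind_eq_some_iff.1 hy
      obtain ⟨v, hv, hv'⟩ := Option.bind_eq_some_iff.1 hy'
      obtain rfl := hP _ _ hu'
      obtain rfl := hP _ _ hv'
      exact ⟨_, hu, hv⟩
    · intro i hi j
      apply Option.ext
      intro y
      exact ⟨aux_fwd hf hP hP2 he _ hi y, aux_fwd hg hP hP2 he.symm _ hi y⟩
  · rintro ⟨⟨p, hp, h1⟩, h2⟩
    let S : Fin k → Set (Fin n × ℤ) := fun m =>
      {y | y.1 = ι m ∧ ∃ j : ℤ, |j| < p ∧ (f (ι m, j) = some y ∨ g (ι m, j) = some y)}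
    have hS : ∀ m, (S m).Finite := by
      intro m
      have : (⋃ j ∈ Set.Ioo (-p) p,
          ({y | f (ι m, j) = some y} ∪ {y | g (ι m, j) = some y})).Finite := by
        refine (Set.finite_Ioo _ _).biUnion fun j _ => Set.Finite.union ?_ ?_ <;>
        · refine Set.Subsingleton.finite ?_
          intro u hu v hv
          exact Option.some.inj (hu.symm.trans hv)
      refine this.subset ?_
      rintro y ⟨-, j, hj, hy⟩
      exact Set.mem_biUnion (x := j) (abs_lt.1 hj) hy
    let E : Fin k → (Fin n × ℤ → Option (Fin n × ℤ)) := fun m x =>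
      if x ∈ S m then none else some x
    have hE1 : ∀ m x, x ∈ S m → E m x = none := fun m x h => if_pos h
    have hE2 : ∀ m x, x ∉ S m → E m x = some x := fun m x h => if_neg h
    have hE3 : ∀ m x y, E m x = some y → x ∉ S m ∧ y = x := by
      intro m x y h
      by_cases hx : x ∈ S m
      · rw [hE1 m x hx] at h; cases h
      · rw [hE2 m x hx] at h; exact ⟨hx, (Option.some.inj h).symm⟩
    have hfold := aux_fold' E (fun m x y h => (hE3 m x y h).2)
    refine ⟨E, fun m => ⟨⟨?_, ?_, ?_, ?_⟩, ?_, ?_⟩, ?_⟩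
    · intro x y a hx hy
      exact (hE3 _ _ _ hx).2.symm.trans (hE3 _ _ _ hy).2
    · intro x y a b hxy hx hy
      rw [(hE3 _ _ _ hx).2, (hE3 _ _ _ hy).2]
      exact hxy
    · refine (hS m).subset ?_
      intro x hx
      by_contra hcon
      have := hE2 m x hcon
      rw [show E m x = none from hx] at this
      cases this
    · refine (hS m).subset ?_
      intro x hx
      by_contra hcon
      exact hx x (hE2 m x hcon)
    · funext x
      by_cases hx : x ∈ S m
      · simp [PComp, hE1 m x hx]
      · simp [PComp, hE2 m x hx]
    · intro x hx
      exact ⟨x, hE2 m x (fun h => hx h.1)⟩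
    · have hnone : ∀ m x, x ∈ S m → (List.ofFn E).foldr PComp PId x = none := by
        intro m x hx
        by_contra hcon
        obtain ⟨y, hy⟩ := Option.ne_none_iff_exists'.1 hcon
        have := ((hfold x y).1 hy).2 m
        rw [hE1 m x hx] at this
        cases this
      funext ⟨i, j⟩
      by_cases hi : ∀ m, i ≠ ι m
      · simp only [PComp, h2 i hi j]
      · push Not at hi
        obtain ⟨m, rfl⟩ := hi
        rcases le_or_gt p |j| with hj | hj
        · obtain ⟨y, hy1, hy2⟩ := h1 m j hj
          simp only [PComp, hy1, hy2]
        · have a1 : PComp f ((List.ofFn E).foldr PComp PId) (ι m, j) = none := by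
            refine Option.bind_eq_none_iff.2 fun y hy => ?_
            exact hnone m y ⟨aux_fst hf hy, j, hj, Or.inl hy⟩
          have a2 : PComp g ((List.ofFn E).foldr PComp PId) (ι m, j) = none := by
            refine Option.bind_eq_none_iff.2 fun y hy => ?_
            exact hnone m y ⟨aux_fst hg hy, j, hj, Or.inr hy⟩
          rw [a1, a2]
end
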